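/- Given a P/T Petri net N = (S, A, T) and two markings m1, m2, if m1 ~p m2 (m1 and m2 are place bisimilar), then m1 ~sp m2 (m1 and m2 are structure-preserving bisimilar). -/

import Mathlib

/-- A transition of a P/T net: a triple (pre-set, label, post-set). -/
structure PNTrans (S A : Type) where
  pre : Multiset S
  label : A
  post : Multiset S
deriving DecidableEq

/-- A P/T Petri net over places `S` and labels `A`: a finite set of transitions,
each with a nonempty pre-set. -/
structure PetriNet (S A : Type) [DecidableEq S] [DecidableEq A] where
  T : Finset (PNTrans S A)
  pre_ne : ∀ t ∈ T, t.pre ≠ 0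

/-- The additive closure `R⊕` of a place relation `R`: the least relation on markings
containing `(θ, θ)` and closed under adding `R`-related places on both sides. -/
inductive AddClosure {S : Type} (R : S → S → Prop) : Multiset S → Multiset S → Prop
  | zero : AddClosure R 0 0
  | cons {s1 s2 : S} {m1 m2 : Multiset S} :
      R s1 s2 → AddClosure R m1 m2 → AddClosure R (s1 ::ₘ m1) (s2 ::ₘ m2)

/-- `Fires N m t m'` : transition `t` of `N` is enabled at marking `m` and its firing
produces `m' = (m ⊖ pre(t)) ⊕ post(t)`. -/
def Fires {S A : Type} [DecidableEq S] [DecidableEq A]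
    (N : PetriNet S A) (m : Multiset S) (t : PNTrans S A) (m' : Multiset S) : Prop :=
  t ∈ N.T ∧ t.pre ≤ m ∧ m' = m - t.pre + t.post

/-- A place bisimulation on `N`. -/
def IsPlaceBisim {S A : Type} [DecidableEq S] [DecidableEq A]
    (N : PetriNet S A) (R : S → S → Prop) : Prop :=
  ∀ m1 m2, AddClosure R m1 m2 →
    (∀ t1 m1', Fires N m1 t1 m1' →
      ∃ t2 m2', Fires N m2 t2 m2' ∧ AddClosure R t1.pre t2.pre ∧
        t1.label = t2.label ∧ AddClosure R t1.post t2.post ∧ AddClosure R m1' m2') ∧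
    (∀ t2 m2', Fires N m2 t2 m2' →
      ∃ t1 m1', Fires N m1 t1 m1' ∧ AddClosure R t1.pre t2.pre ∧
        t1.label = t2.label ∧ AddClosure R t1.post t2.post ∧ AddClosure R m1' m2')

/-- Place bisimilarity `m1 ~p m2`. -/
def PlaceBisimilar {S A : Type} [DecidableEq S] [DecidableEq A]
    (N : PetriNet S A) (m1 m2 : Multiset S) : Prop :=
  ∃ R : S → S → Prop, IsPlaceBisim N R ∧ AddClosure R m1 m2

/-- An interleaving bisimulation on the markings of `N`. -/
def IsIntBisim {S A : Type} [DecidableEq S] [DecidableEq A]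
    (N : PetriNet S A) (Q : Multiset S → Multiset S → Prop) : Prop :=
  ∀ m1 m2, Q m1 m2 →
    (∀ t1 m1', Fires N m1 t1 m1' →
      ∃ t2 m2', Fires N m2 t2 m2' ∧ t1.label = t2.label ∧ Q m1' m2') ∧
    (∀ t2 m2', Fires N m2 t2 m2' →
      ∃ t1 m1', Fires N m1 t1 m1' ∧ t1.label = t2.label ∧ Q m1' m2')

/-- Interleaving bisimilarity `m1 ~int m2`. -/
def IntBisimilar {S A : Type} [DecidableEq S] [DecidableEq A]
    (N : PetriNet S A) (m1 m2 : Multiset S) : Prop :=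
  ∃ Q, IsIntBisim N Q ∧ Q m1 m2

/-- First projection of a linking. -/
def lproj1 {S : Type} (l : Multiset (S × S)) : Multiset S := l.map Prod.fst

/-- Second projection of a linking. -/
def lproj2 {S : Type} (l : Multiset (S × S)) : Multiset S := l.map Prod.snd

/-- A structure-preserving bisimulation on `N`: a set of linkings. -/
def IsSpBisim {S A : Type} [DecidableEq S] [DecidableEq A]
    (N : PetriNet S A) (R : Set (Multiset (S × S))) : Prop :=
  ∀ l ∈ R, ∀ c ≤ l,
    (∀ t1 ∈ N.T, t1.pre = lproj1 c →
      ∃ t2 ∈ N.T, t1.label = t2.label ∧ t2.pre = lproj2 c ∧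
        ∃ cb : Multiset (S × S), t1.post = lproj1 cb ∧ t2.post = lproj2 cb ∧
          l - c + cb ∈ R) ∧
    (∀ t2 ∈ N.T, t2.pre = lproj2 c →
      ∃ t1 ∈ N.T, t1.label = t2.label ∧ t1.pre = lproj1 c ∧
        ∃ cb : Multiset (S × S), t1.post = lproj1 cb ∧ t2.post = lproj2 cb ∧
          l - c + cb ∈ R)

/-- Structure-preserving bisimilarity `m1 ~sp m2`. -/
def SpBisimilar {S A : Type} [DecidableEq S] [DecidableEq A]
    (N : PetriNet S A) (m1 m2 : Multiset S) : Prop :=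
  ∃ (R : Set (Multiset (S × S))) (l : Multiset (S × S)),
    IsSpBisim N R ∧ l ∈ R ∧ lproj1 l = m1 ∧ lproj2 l = m2

theorem AddClosure.card_eq' {S : Type} {R : S → S → Prop} {m1 m2 : Multiset S}
    (h : AddClosure R m1 m2) : m1.card = m2.card := by
  induction h with
  | zero => rfl
  | cons _ _ ih => simp [ih]

theorem AddClosure.exists_linking {S : Type} {R : S → S → Prop} {m1 m2 : Multiset S}
    (h : AddClosure R m1 m2) :
    ∃ l : Multiset (S × S), (∀ p ∈ l, R p.1 p.2) ∧ lproj1 l = m1 ∧ lproj2 l = m2 := by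
  induction h with
  | zero => exact ⟨0, by simp, by simp [lproj1], by simp [lproj2]⟩
  | @cons s1 s2 m1 m2 hR _ ih =>
    obtain ⟨l, hl, h1, h2⟩ := ih
    refine ⟨(s1, s2) ::ₘ l, ?_, ?_, ?_⟩
    · intro p hp
      rcases Multiset.mem_cons.1 hp with rfl | hp
      · exact hR
      · exact hl p hp
    · rw [← h1]; simp [lproj1]
    · rw [← h2]; simp [lproj2]

theorem AddClosure.of_linking {S : Type} {R : S → S → Prop} (l : Multiset (S × S)) :
    (∀ p ∈ l, R p.1 p.2) → AddClosure R (lproj1 l) (lproj2 l) := by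
  induction l using Multiset.induction_on with
  | empty => intro _; exact AddClosure.zero
  | cons p l ih =>
    intro h
    have h1 := h p (Multiset.mem_cons_self p l)
    have h2 := ih (fun q hq => h q (Multiset.mem_cons_of_mem hq))
    simpa [lproj1, lproj2] using AddClosure.cons h1 h2

theorem linking_update {S : Type} [DecidableEq S] {R : S → S → Prop}
    {l c cb : Multiset (S × S)} (hl : ∀ p ∈ l, R p.1 p.2) (hcb : ∀ p ∈ cb, R p.1 p.2) :
    ∀ p ∈ l - c + cb, R p.1 p.2 := by
  intro p hp
  rcases Multiset.mem_add.1 hp with hp | hp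
  · exact hl p (Multiset.mem_of_le (Multiset.sub_le_self l c) hp)
  · exact hcb p hp

/-- place bisimilarity implies structure-preserving bisimilarity. -/
theorem placeBisimilar_spBisimilar {S A : Type} [Fintype S] [Fintype A]
    [DecidableEq S] [DecidableEq A] (N : PetriNet S A)
    (m1 m2 : Multiset S) (h : PlaceBisimilar N m1 m2) :
    SpBisimilar N m1 m2 := by
  obtain ⟨R, hR, hm⟩ := h
  obtain ⟨l, hl, h1, h2⟩ := hm.exists_linking
  refine ⟨{l | ∀ p ∈ l, R p.1 p.2}, l, ?_, hl, h1, h2⟩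
  intro l hl c hc
  have hcR := AddClosure.of_linking (R := R) c (fun p hp => hl p (Multiset.mem_of_le hc hp))
  have hcc := hcR.card_eq'
  constructor
  · intro t1 ht1 hpre
    obtain ⟨t2, m2', ⟨ht2, hle, -⟩, hp, hlab, hpost, -⟩ :=
      (hR _ _ hcR).1 t1 _ ⟨ht1, hpre.le, rfl⟩
    obtain ⟨cb, hcb, e1, e2⟩ := hpost.exists_linking
    refine ⟨t2, ht2, hlab, Multiset.eq_of_le_of_card_le hle ?_, cb, e1.symm, e2.symm,
      linking_update hl hcb⟩
    rw [← hp.card_eq', hpre, hcc]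
  · intro t2 ht2 hpre
    obtain ⟨t1, m1', ⟨ht1, hle, -⟩, hp, hlab, hpost, -⟩ :=
      (hR _ _ hcR).2 t2 _ ⟨ht2, hpre.le, rfl⟩
    obtain ⟨cb, hcb, e1, e2⟩ := hpost.exists_linking
    refine ⟨t1, ht1, hlab, Multiset.eq_of_le_of_card_le hle ?_, cb, e1.symm, e2.symm,
      linking_update hl hcb⟩
    rw [hp.card_eq', hpre, hcc]
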